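/- arXiv:2003.10277 — 2 statements merged into one kernel-verified Lean document; each statement's English description precedes it below -/
import Mathlib

section
/- Let μ and μ' be stable matchings such that Γ*(μ,μ') has at least two nontrivial weakly connected components. Then there exist stable matchings μ̄ and μ̄' such that μ, μ', μ̄, μ̄' are pairwise distinct and x_μ + x_μ' = x_μ̄ + x_μ̄'; in particular, x_μ and x_μ' are not adjacent extreme points of P_SMT. -/
/-!
Let `S` be the vertex set of `Γ*(μ, μ')`; it contains `μ` and `μ'`. All vertices of `S` in one row
(same man) or one column (same woman) are pairwise adjacent, because preferences are total, so a
union `C` of components of `Γ*(μ, μ')` is a union of rows and columns of `S`. Hence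
`switch μ μ' C`, which is `μ'` on `C` and `μ` off `C`, gives every agent either his whole
`μ`-assignment or his whole `μ'`-assignment (`mpartner_switch`, `wpartner_switch`).

It is stable (`isStable_switch`): a pair `(m, w)` blocking it cannot have both `m` and `w` on the
same side, as it would block `μ` or `μ'`. If, say, `m` keeps `μ(m)` and `w` gets `μ'(w)`, then
stability of `μ` and `μ'` gives `μ(m) < w ≤ μ'(m)` and `μ'(w) < m ≤ μ(w)`, so `(m, w) ∈ S`
and `m`, `w` are on the same side after all.

Switching on `C₁` and on its complement gives two stable matchings with
`x_μ + x_μ' = x_ν + x_ν'`. They differ from each other and from `μ`, `μ'` because each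
nontrivial component contains a vertex of the symmetric difference of `μ` and `μ'`
(`exists_mem_xor`).
-/

open scoped Classical

/-- An instance of the stable marriage problem with ties: men `M`, women `W`,
acceptable pairs `Acc`, and for each man (resp. woman) a total preorder on the
acceptable partners. `mle m w w'` means `w ≤_m w'`, `wle w m m'` means `m ≤_w m'`. -/
structure SMTI (M W : Type*) where
  Acc : Set (M × W)
  mle : M → W → W → Prop
  wle : W → M → M → Prop
  mle_refl : ∀ m w, (m, w) ∈ Acc → mle m w w
  mle_trans : ∀ m w₁ w₂ w₃, mle m w₁ w₂ → mle m w₂ w₃ → mle m w₁ w₃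
  mle_total : ∀ m w w', (m, w) ∈ Acc → (m, w') ∈ Acc → mle m w w' ∨ mle m w' w
  mle_mem : ∀ m w w', mle m w w' → (m, w) ∈ Acc ∧ (m, w') ∈ Acc
  wle_refl : ∀ w m, (m, w) ∈ Acc → wle w m m
  wle_trans : ∀ w m₁ m₂ m₃, wle w m₁ m₂ → wle w m₂ m₃ → wle w m₁ m₃
  wle_total : ∀ w m m', (m, w) ∈ Acc → (m', w) ∈ Acc → wle w m m' ∨ wle w m' m
  wle_mem : ∀ w m m', wle w m m' → (m, w) ∈ Acc ∧ (m', w) ∈ Acc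

namespace SMTI

variable {M W : Type*} (I : SMTI M W)

/-- `≤_m` extended to `Option W`, where `none` (being single) is strictly below
every acceptable partner. -/
def mleO (m : M) : Option W → Option W → Prop
  | none, none => True
  | none, some w => (m, w) ∈ I.Acc
  | some _, none => False
  | some w, some w' => I.mle m w w'

/-- `≤_w` extended to `Option M`. -/
def wleO (w : W) : Option M → Option M → Prop
  | none, none => True
  | none, some m => (m, w) ∈ I.Acc
  | some _, none => False
  | some m, some m' => I.wle w m m'

/-- strict version of `mleO` -/
def mltO (m : M) (a b : Option W) : Prop := I.mleO m a b ∧ ¬ I.mleO m b a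

/-- strict version of `wleO` -/
def wltO (w : W) (a b : Option M) : Prop := I.wleO w a b ∧ ¬ I.wleO w b a

/-- A matching: a set of acceptable pairs in which every man and every woman
occurs at most once. -/
def IsMatching (μ : Set (M × W)) : Prop :=
  μ ⊆ I.Acc ∧ (∀ m w w', (m, w) ∈ μ → (m, w') ∈ μ → w = w') ∧
    (∀ m m' w, (m, w) ∈ μ → (m', w) ∈ μ → m = m')

/-- the partner `μ(m)` of a man `m` (`none` if `m` is single) -/
noncomputable def mpartner (μ : Set (M × W)) (m : M) : Option W :=
  if h : ∃ w, (m, w) ∈ μ then some h.choose else none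

/-- the partner `μ(w)` of a woman `w` (`none` if `w` is single) -/
noncomputable def wpartner (μ : Set (M × W)) (w : W) : Option M :=
  if h : ∃ m, (m, w) ∈ μ then some h.choose else none

/-- A stable matching: no acceptable pair is blocking. -/
def IsStable (μ : Set (M × W)) : Prop :=
  I.IsMatching μ ∧ ∀ p ∈ I.Acc,
    I.mleO p.1 (some p.2) (mpartner μ p.1) ∨ I.wleO p.2 (some p.1) (wpartner μ p.2)

/-- `between_m(a, b, c)` -/
def betweenM (m : M) (a b c : Option W) : Prop :=
  a = b ∨ a = c ∨ (I.mltO m b a ∧ I.mleO m a c) ∨ (I.mltO m c a ∧ I.mleO m a b)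

/-- `between_w(a, b, c)` -/
def betweenW (w : W) (a b c : Option M) : Prop :=
  a = b ∨ a = c ∨ (I.wltO w b a ∧ I.wleO w a c) ∨ (I.wltO w c a ∧ I.wleO w a b)

/-- the (directed) edge relation of the marriage graph `Γ` -/
def gammaEdge (p q : M × W) : Prop :=
  p ∈ I.Acc ∧ q ∈ I.Acc ∧
    ((p.1 = q.1 ∧ p.2 ≠ q.2 ∧ I.mle p.1 p.2 q.2) ∨
      (p.2 = q.2 ∧ p.1 ≠ q.1 ∧ I.wle p.2 p.1 q.1))

/-- the vertex set of `Γ*(μ, μ')` -/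
noncomputable def starV (μ μ' : Set (M × W)) : Set (M × W) :=
  {p | p ∈ I.Acc ∧
    I.betweenM p.1 (some p.2) (mpartner μ p.1) (mpartner μ' p.1) ∧
    I.betweenW p.2 (some p.1) (wpartner μ p.2) (wpartner μ' p.2)}

/-- undirected adjacency inside the subgraph of `Γ` induced by the vertex set `S` -/
def adjIn (S : Set (M × W)) (p q : M × W) : Prop :=
  p ∈ S ∧ q ∈ S ∧ (I.gammaEdge p q ∨ I.gammaEdge q p)

/-- `p` and `q` lie in the same weakly connected component of the subgraph of `Γ`
induced by `S` -/
def connIn (S : Set (M × W)) (p q : M × W) : Prop :=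
  p ∈ S ∧ q ∈ S ∧ Relation.ReflTransGen (I.adjIn S) p q

/-- `p` is an isolated vertex of the subgraph of `Γ` induced by `S` -/
def IsIsolated (S : Set (M × W)) (p : M × W) : Prop :=
  p ∈ S ∧ ∀ q, ¬ I.adjIn S p q

/-- `C` is a nontrivial weakly connected component of the subgraph of `Γ`
induced by `S` -/
def IsNontrivialComp (S : Set (M × W)) (C : Set (M × W)) : Prop :=
  (∃ v ∈ S, C = {u | I.connIn S v u}) ∧ ¬ C.Subsingleton

/-- `B` is the vertex set of a principal block (`P^m` or `P^w`) of the subgraph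
of `Γ` induced by `S` -/
def IsPrincipalBlock (S : Set (M × W)) (B : Set (M × W)) : Prop :=
  (∃ m : M, B = {p ∈ S | p.1 = m}) ∨ (∃ w : W, B = {p ∈ S | p.2 = w})

/-- characteristic vector `x_ν ∈ ℝ^A` of a set of pairs -/
noncomputable def chi (ν : Set (M × W)) : M × W → ℝ := fun p => if p ∈ ν then 1 else 0

/-- standard basis vector `e_v` -/
noncomputable def eVec (v : M × W) : M × W → ℝ := fun p => if p = v then 1 else 0

/-- dot product on `ℝ^{M × W}` -/
noncomputable def dotP [Fintype M] [Fintype W] (α x : M × W → ℝ) : ℝ := ∑ p, α p * x p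

/-- `E`: the span of all vectors `α` (supported on the acceptable pairs) for which
there is `β` so that `α · x ≥ β` is valid for all stable matchings and tight at
both `μ` and `μ'`. -/
noncomputable def Espace [Fintype M] [Fintype W] (μ μ' : Set (M × W)) :
    Submodule ℝ (M × W → ℝ) :=
  Submodule.span ℝ {α | (∀ p, p ∉ I.Acc → α p = 0) ∧ ∃ β : ℝ,
    (∀ ν, I.IsStable ν → β ≤ dotP α (chi ν)) ∧
    dotP α (chi μ) = β ∧ dotP α (chi μ') = β}

/-- `a` is linked to `b`: `E` contains `λ e_a + γ e_b` with `λ ≠ 0`. -/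
def linked [Fintype M] [Fintype W] (μ μ' : Set (M × W)) (a b : M × W) : Prop :=
  ∃ l g : ℝ, l ≠ 0 ∧ l • eVec a + g • eVec b ∈ I.Espace μ μ'

/-- `x_μ` and `x_μ'` are adjacent extreme points of `P_SMT`: they are distinct, and
whenever their midpoint is a convex combination of extreme points (characteristic
vectors of stable matchings), only `x_μ` and `x_μ'` get nonzero weight. -/
def AdjacentSM [Fintype M] [Fintype W] (μ μ' : Set (M × W)) : Prop :=
  chi μ ≠ chi μ' ∧
  ∀ (T : Finset (Set (M × W))) (c : Set (M × W) → ℝ),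
    (∀ ν ∈ T, I.IsStable ν) → (∀ ν ∈ T, 0 ≤ c ν) → (∑ ν ∈ T, c ν) = 1 →
    (∑ ν ∈ T, c ν • chi ν) = (2⁻¹ : ℝ) • (chi μ + chi μ') →
    ∀ ν ∈ T, c ν ≠ 0 → chi ν = chi μ ∨ chi ν = chi μ'

end SMTI

namespace SMTI

variable {M W : Type*} (I : SMTI M W)

/-! ### Partners in a matching -/

lemma mpartner_eq_some {μ : Set (M × W)} (h : I.IsMatching μ) (m : M) (w : W) :
    mpartner μ m = some w ↔ (m, w) ∈ μ := by
  unfold mpartner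
  split_ifs with hx
  · constructor
    · intro e
      rw [← Option.some.inj e]
      exact hx.choose_spec
    · intro e
      rw [h.2.1 m _ _ hx.choose_spec e]
  · simp only [false_iff]
    exact fun e => hx ⟨w, e⟩

lemma wpartner_eq_some {μ : Set (M × W)} (h : I.IsMatching μ) (w : W) (m : M) :
    wpartner μ w = some m ↔ (m, w) ∈ μ := by
  unfold wpartner
  split_ifs with hx
  · constructor
    · intro e
      rw [← Option.some.inj e]
      exact hx.choose_spec
    · intro e
      rw [h.2.2 _ _ w hx.choose_spec e]
  · simp only [false_iff]
    exact fun e => hx ⟨m, e⟩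

/-- An acceptable `w` that is not weakly below the partner of `m` is strictly above it. -/
lemma mltO_of_not {μ : Set (M × W)} (h : I.IsMatching μ) {m : M} {w : W} (hp : (m, w) ∈ I.Acc)
    (hn : ¬ I.mleO m (some w) (mpartner μ m)) : I.mltO m (mpartner μ m) (some w) := by
  refine ⟨?_, hn⟩
  cases hx : mpartner μ m with
  | none => exact hp
  | some w' =>
    rw [hx] at hn
    exact (I.mle_total m w w' hp (h.1 ((I.mpartner_eq_some h m w').1 hx))).resolve_left hn

/-- An acceptable `m` that is not weakly below the partner of `w` is strictly above it. -/
lemma wltO_of_not {μ : Set (M × W)} (h : I.IsMatching μ) {m : M} {w : W} (hp : (m, w) ∈ I.Acc)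
    (hn : ¬ I.wleO w (some m) (wpartner μ w)) : I.wltO w (wpartner μ w) (some m) := by
  refine ⟨?_, hn⟩
  cases hx : wpartner μ w with
  | none => exact hp
  | some m' =>
    rw [hx] at hn
    exact (I.wle_total w m m' hp (h.1 ((I.wpartner_eq_some h w m').1 hx))).resolve_left hn

lemma left_subset_starV {μ μ' : Set (M × W)} (h : I.IsMatching μ) : μ ⊆ I.starV μ μ' :=
  fun p hp => ⟨h.1 hp, Or.inl ((I.mpartner_eq_some h p.1 p.2).2 hp).symm,
    Or.inl ((I.wpartner_eq_some h p.2 p.1).2 hp).symm⟩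

lemma right_subset_starV {μ μ' : Set (M × W)} (h : I.IsMatching μ') : μ' ⊆ I.starV μ μ' :=
  fun p hp => ⟨h.1 hp, Or.inr (Or.inl ((I.mpartner_eq_some h p.1 p.2).2 hp).symm),
    Or.inr (Or.inl ((I.wpartner_eq_some h p.2 p.1).2 hp).symm)⟩

/-! ### Switching between two stable matchings -/

/-- Within `S`, membership in `C` depends only on the row, and only on the column: `C` is a union
of weakly connected components of the subgraph of `Γ` induced by `S`. -/
def RowColClosed (S C : Set (M × W)) : Prop :=
  (∀ m w w', (m, w) ∈ S → (m, w') ∈ S → (m, w) ∈ C → (m, w') ∈ C) ∧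
  (∀ m m' w, (m, w) ∈ S → (m', w) ∈ S → (m, w) ∈ C → (m', w) ∈ C)

lemma RowColClosed.compl {S C : Set (M × W)} (h : RowColClosed S C) : RowColClosed S Cᶜ :=
  ⟨fun m w w' h1 h2 h3 h4 => h3 (h.1 m w' w h2 h1 h4),
    fun m m' w h1 h2 h3 h4 => h3 (h.2 m' m w h2 h1 h4)⟩

/-- The set of pairs that agrees with `μ'` on `C` and with `μ` off `C`. -/
def switch (μ μ' C : Set (M × W)) : Set (M × W) := {p | (p ∈ C ∧ p ∈ μ') ∨ (p ∉ C ∧ p ∈ μ)}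

lemma isMatching_switch {μ μ' C : Set (M × W)} (h : I.IsMatching μ) (h' : I.IsMatching μ')
    (hC : RowColClosed (I.starV μ μ') C) : I.IsMatching (switch μ μ' C) := by
  have hl := I.left_subset_starV (μ' := μ') h
  have hr := I.right_subset_starV (μ := μ) h'
  refine ⟨?_, ?_, ?_⟩
  · rintro p (hp | hp)
    · exact h'.1 hp.2
    · exact h.1 hp.2
  · rintro m w w' (h1 | h1) (h2 | h2)
    · exact h'.2.1 m w w' h1.2 h2.2
    · exact absurd (hC.1 m w w' (hr h1.2) (hl h2.2) h1.1) h2.1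
    · exact absurd (hC.1 m w' w (hr h2.2) (hl h1.2) h2.1) h1.1
    · exact h.2.1 m w w' h1.2 h2.2
  · rintro m m' w (h1 | h1) (h2 | h2)
    · exact h'.2.2 m m' w h1.2 h2.2
    · exact absurd (hC.2 m m' w (hr h1.2) (hl h2.2) h1.1) h2.1
    · exact absurd (hC.2 m' m w (hr h2.2) (hl h1.2) h2.1) h1.1
    · exact h.2.2 m m' w h1.2 h2.2

/-- Row `m` of `Γ*(μ, μ')` lies wholly in `C` or wholly outside `C`, and accordingly
`switch μ μ' C` gives `m` the partner from `μ'` or from `μ`. -/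
lemma mpartner_switch {μ μ' C : Set (M × W)} (h : I.IsMatching μ) (h' : I.IsMatching μ')
    (hC : RowColClosed (I.starV μ μ') C) (m : M) :
    (mpartner (switch μ μ' C) m = mpartner μ' m ∧ ∀ w, (m, w) ∈ I.starV μ μ' → (m, w) ∈ C) ∨
    (mpartner (switch μ μ' C) m = mpartner μ m ∧ ∀ w, (m, w) ∈ I.starV μ μ' → (m, w) ∉ C) := by
  have hl := I.left_subset_starV (μ' := μ') h
  have hr := I.right_subset_starV (μ := μ) h'
  have hs := I.isMatching_switch h h' hC
  by_cases hx : ∃ w, (m, w) ∈ I.starV μ μ' ∧ (m, w) ∈ C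
  · obtain ⟨w₀, h0, h0'⟩ := hx
    have key : ∀ w, (m, w) ∈ I.starV μ μ' → (m, w) ∈ C := fun w hw => hC.1 m w₀ w h0 hw h0'
    refine Or.inl ⟨Option.ext fun w => ?_, key⟩
    rw [I.mpartner_eq_some hs, I.mpartner_eq_some h']
    exact ⟨fun e => e.elim And.right fun e => absurd (key w (hl e.2)) e.1,
      fun e => Or.inl ⟨key w (hr e), e⟩⟩
  · have key : ∀ w, (m, w) ∈ I.starV μ μ' → (m, w) ∉ C := fun w hw hc => hx ⟨w, hw, hc⟩
    refine Or.inr ⟨Option.ext fun w => ?_, key⟩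
    rw [I.mpartner_eq_some hs, I.mpartner_eq_some h]
    exact ⟨fun e => e.elim (fun e => absurd e.1 (key w (hr e.2))) And.right,
      fun e => Or.inr ⟨key w (hl e), e⟩⟩

/-- The analogue of `mpartner_switch` for columns. -/
lemma wpartner_switch {μ μ' C : Set (M × W)} (h : I.IsMatching μ) (h' : I.IsMatching μ')
    (hC : RowColClosed (I.starV μ μ') C) (w : W) :
    (wpartner (switch μ μ' C) w = wpartner μ' w ∧ ∀ m, (m, w) ∈ I.starV μ μ' → (m, w) ∈ C) ∨
    (wpartner (switch μ μ' C) w = wpartner μ w ∧ ∀ m, (m, w) ∈ I.starV μ μ' → (m, w) ∉ C) := by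
  have hl := I.left_subset_starV (μ' := μ') h
  have hr := I.right_subset_starV (μ := μ) h'
  have hs := I.isMatching_switch h h' hC
  by_cases hx : ∃ m, (m, w) ∈ I.starV μ μ' ∧ (m, w) ∈ C
  · obtain ⟨m₀, h0, h0'⟩ := hx
    have key : ∀ m, (m, w) ∈ I.starV μ μ' → (m, w) ∈ C := fun m hm => hC.2 m₀ m w h0 hm h0'
    refine Or.inl ⟨Option.ext fun m => ?_, key⟩
    rw [I.wpartner_eq_some hs, I.wpartner_eq_some h']
    exact ⟨fun e => e.elim And.right fun e => absurd (key m (hl e.2)) e.1,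
      fun e => Or.inl ⟨key m (hr e), e⟩⟩
  · have key : ∀ m, (m, w) ∈ I.starV μ μ' → (m, w) ∉ C := fun m hm hc => hx ⟨m, hm, hc⟩
    refine Or.inr ⟨Option.ext fun m => ?_, key⟩
    rw [I.wpartner_eq_some hs, I.wpartner_eq_some h]
    exact ⟨fun e => e.elim (fun e => absurd e.1 (key m (hr e.2))) And.right,
      fun e => Or.inr ⟨key m (hl e), e⟩⟩

lemma isStable_switch {μ μ' C : Set (M × W)} (h : I.IsStable μ) (h' : I.IsStable μ')
    (hC : RowColClosed (I.starV μ μ') C) : I.IsStable (switch μ μ' C) := by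
  refine ⟨I.isMatching_switch h.1 h'.1 hC, ?_⟩
  rintro ⟨m, w⟩ hp
  have s := h.2 _ hp
  have s' := h'.2 _ hp
  dsimp only at s s' ⊢
  by_contra hcon
  rw [not_or] at hcon
  obtain ⟨hm, hw⟩ := hcon
  rcases I.mpartner_switch h.1 h'.1 hC m with ⟨em, cm⟩ | ⟨em, cm⟩ <;>
  rcases I.wpartner_switch h.1 h'.1 hC w with ⟨ew, cw⟩ | ⟨ew, cw⟩ <;>
  rw [em] at hm <;> rw [ew] at hw
  · exact s'.elim hm hw
  · have hS : (m, w) ∈ I.starV μ μ' :=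
      ⟨hp, Or.inr (Or.inr (Or.inr ⟨I.mltO_of_not h'.1 hp hm, s.resolve_right hw⟩)),
        Or.inr (Or.inr (Or.inl ⟨I.wltO_of_not h.1 hp hw, s'.resolve_left hm⟩))⟩
    exact cw m hS (cm w hS)
  · have hS : (m, w) ∈ I.starV μ μ' :=
      ⟨hp, Or.inr (Or.inr (Or.inl ⟨I.mltO_of_not h.1 hp hm, s'.resolve_right hw⟩)),
        Or.inr (Or.inr (Or.inr ⟨I.wltO_of_not h'.1 hp hw, s.resolve_left hm⟩))⟩
    exact cm w hS (cw m hS)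
  · exact s.elim hm hw

/-! ### Components of the marriage graph -/

lemma adjIn_row {S : Set (M × W)} (hS : S ⊆ I.Acc) {m : M} {w w' : W} (h : (m, w) ∈ S)
    (h' : (m, w') ∈ S) (hne : w ≠ w') : I.adjIn S (m, w) (m, w') := by
  refine ⟨h, h', ?_⟩
  rcases I.mle_total m w w' (hS h) (hS h') with hl | hl
  · exact Or.inl ⟨hS h, hS h', Or.inl ⟨rfl, hne, hl⟩⟩
  · exact Or.inr ⟨hS h', hS h, Or.inl ⟨rfl, hne.symm, hl⟩⟩

lemma adjIn_col {S : Set (M × W)} (hS : S ⊆ I.Acc) {m m' : M} {w : W} (h : (m, w) ∈ S)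
    (h' : (m', w) ∈ S) (hne : m ≠ m') : I.adjIn S (m, w) (m', w) := by
  refine ⟨h, h', ?_⟩
  rcases I.wle_total w m m' (hS h) (hS h') with hl | hl
  · exact Or.inl ⟨hS h, hS h', Or.inr ⟨rfl, hne, hl⟩⟩
  · exact Or.inr ⟨hS h', hS h, Or.inr ⟨rfl, hne.symm, hl⟩⟩

/-- Rows and columns are cliques of `Γ`, so a component is a union of rows and columns. -/
lemma rowColClosed_comp {S : Set (M × W)} (hS : S ⊆ I.Acc) (v : M × W) :
    RowColClosed S {u | I.connIn S v u} := by
  constructor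
  · intro m w w' h h' hc
    by_cases e : w = w'
    · exact e ▸ hc
    · exact ⟨hc.1, h', hc.2.2.tail (I.adjIn_row hS h h' e)⟩
  · intro m m' w h h' hc
    by_cases e : m = m'
    · exact e ▸ hc
    · exact ⟨hc.1, h', hc.2.2.tail (I.adjIn_col hS h h' e)⟩

lemma adjIn_symm {S : Set (M × W)} {p q : M × W} (h : I.adjIn S p q) : I.adjIn S q p :=
  ⟨h.2.1, h.1, h.2.2.symm⟩

/-- Two components sharing a vertex coincide. -/
lemma comp_eq {S C₁ C₂ : Set (M × W)} (h₁ : I.IsNontrivialComp S C₁)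
    (h₂ : I.IsNontrivialComp S C₂) {p : M × W} (hp₁ : p ∈ C₁) (hp₂ : p ∈ C₂) : C₁ = C₂ := by
  obtain ⟨⟨v, hv, rfl⟩, -⟩ := h₁
  obtain ⟨⟨v', hv', rfl⟩, -⟩ := h₂
  have hsymm : ∀ {a b}, Relation.ReflTransGen (I.adjIn S) a b →
      Relation.ReflTransGen (I.adjIn S) b a := by
    intro a b h
    induction h with
    | refl => exact .refl
    | tail _ hbc ih => exact ih.head (I.adjIn_symm hbc)
  ext u
  exact ⟨fun hu => ⟨hv', hu.2.1, (hp₂.2.2.trans (hsymm hp₁.2.2)).trans hu.2.2⟩,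
    fun hu => ⟨hv, hu.2.1, (hp₁.2.2.trans (hsymm hp₂.2.2)).trans hu.2.2⟩⟩

/-- If `μ` and `μ'` both match `m` to `b`, then `b` is the only candidate in row `m` of
`Γ*(μ, μ')`. -/
lemma betweenM_self {m : M} {a b : Option W} (h : I.betweenM m a b b) : a = b := by
  rcases h with h | h | h | h
  · exact h
  · exact h
  · exact absurd h.2 h.1.2
  · exact absurd h.2 h.1.2

lemma betweenW_self {w : W} {a b : Option M} (h : I.betweenW w a b b) : a = b := by
  rcases h with h | h | h | h
  · exact h
  · exact h
  · exact absurd h.2 h.1.2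
  · exact absurd h.2 h.1.2

/-- A vertex of `Γ*(μ, μ')` lying in both matchings is isolated. -/
lemma not_adjIn_of_mem_both {μ μ' : Set (M × W)} (h : I.IsMatching μ) (h' : I.IsMatching μ')
    {p q : M × W} (hp : p ∈ μ) (hp' : p ∈ μ') : ¬ I.adjIn (I.starV μ μ') p q := by
  obtain ⟨m, w⟩ := p
  obtain ⟨m', w'⟩ := q
  rintro ⟨-, ⟨-, hm, hw⟩, hadj⟩
  dsimp only at hm hw
  have e1 := (I.mpartner_eq_some h m w).2 hp
  have e2 := (I.mpartner_eq_some h' m w).2 hp'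
  have e3 := (I.wpartner_eq_some h w m).2 hp
  have e4 := (I.wpartner_eq_some h' w m).2 hp'
  have row : m = m' → w = w' := by
    rintro rfl
    rw [e1, e2] at hm
    exact (Option.some.inj (I.betweenM_self hm)).symm
  have col : w = w' → m = m' := by
    rintro rfl
    rw [e3, e4] at hw
    exact (Option.some.inj (I.betweenW_self hw)).symm
  rcases hadj with ⟨-, -, ⟨e, ne, -⟩ | ⟨e, ne, -⟩⟩ | ⟨-, -, ⟨e, ne, -⟩ | ⟨e, ne, -⟩⟩
  · exact ne (row e)
  · exact ne (col e)
  · exact ne (row e.symm).symm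
  · exact ne (col e.symm).symm

/-- The row of a vertex of `Γ*(μ, μ')` outside both matchings meets the symmetric difference:
the vertex lies strictly above one of the partners of the man, and weakly below the other. -/
lemma exists_row_xor {μ μ' : Set (M × W)} (h : I.IsMatching μ) (h' : I.IsMatching μ')
    {m : M} {w : W} (hp : (m, w) ∈ I.starV μ μ') (hn : (m, w) ∉ μ) (hn' : (m, w) ∉ μ') :
    ∃ w', Xor ((m, w') ∈ μ) ((m, w') ∈ μ') := by
  rcases hp.2.1 with e | e | ⟨e1, e2⟩ | ⟨e1, e2⟩ <;> dsimp only at *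
  · exact absurd ((I.mpartner_eq_some h m w).1 e.symm) hn
  · exact absurd ((I.mpartner_eq_some h' m w).1 e.symm) hn'
  · cases hx : mpartner μ' m with
    | none => rw [hx] at e2; exact e2.elim
    | some w' =>
      refine ⟨w', Or.inr ⟨(I.mpartner_eq_some h' m w').1 hx, fun hc => ?_⟩⟩
      rw [(I.mpartner_eq_some h m w').2 hc, ← hx] at e1
      exact e1.2 e2
  · cases hx : mpartner μ m with
    | none => rw [hx] at e2; exact e2.elim
    | some w' =>
      refine ⟨w', Or.inl ⟨(I.mpartner_eq_some h m w').1 hx, fun hc => ?_⟩⟩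
      rw [(I.mpartner_eq_some h' m w').2 hc, ← hx] at e1
      exact e1.2 e2

/-- Every nontrivial component meets the symmetric difference of `μ` and `μ'`, so switching on it
changes both matchings. -/
lemma exists_mem_xor {μ μ' C : Set (M × W)} (h : I.IsMatching μ) (h' : I.IsMatching μ')
    (hC : I.IsNontrivialComp (I.starV μ μ') C) : ∃ p ∈ C, Xor (p ∈ μ) (p ∈ μ') := by
  have hS : I.starV μ μ' ⊆ I.Acc := fun p hp => hp.1
  obtain ⟨⟨v, hv, rfl⟩, hns⟩ := hC
  have hcl := I.rowColClosed_comp hS v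
  have hvC : I.connIn (I.starV μ μ') v v := ⟨hv, hv, .refl⟩
  by_cases hvμ : v ∈ μ <;> by_cases hvμ' : v ∈ μ'
  · refine absurd ?_ hns
    have : ∀ u, I.connIn (I.starV μ μ') v u → v = u := by
      intro u hu
      rcases hu.2.2.cases_head with e | ⟨q, hq, -⟩
      · exact e
      · exact absurd hq (I.not_adjIn_of_mem_both h h' hvμ hvμ')
    intro a ha b hb
    exact (this a ha).symm.trans (this b hb)
  · exact ⟨v, hvC, Or.inl ⟨hvμ, hvμ'⟩⟩
  · exact ⟨v, hvC, Or.inr ⟨hvμ', hvμ⟩⟩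
  · obtain ⟨m, w⟩ := v
    obtain ⟨w', hx⟩ := I.exists_row_xor h h' hv hvμ hvμ'
    refine ⟨(m, w'), hcl.1 m w w' hv ?_ hvC, hx⟩
    rcases hx with hx | hx
    · exact I.left_subset_starV h hx.1
    · exact I.right_subset_starV h' hx.1

/-! ### Characteristic vectors -/

lemma chi_injective {μ ν : Set (M × W)} (h : chi μ = chi ν) : μ = ν := by
  ext p
  have := congrFun h p
  unfold chi at this
  by_cases h1 : p ∈ μ <;> by_cases h2 : p ∈ ν <;> simp_all

lemma chi_switch_add (μ μ' C : Set (M × W)) :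
    chi μ + chi μ' = chi (switch μ μ' C) + chi (switch μ μ' Cᶜ) := by
  funext p
  by_cases hc : p ∈ C <;> simp [chi, switch, hc, add_comm]

end SMTI

open SMTI in

theorem stmt12 {M W : Type*} [Fintype M] [Fintype W] (I : SMTI M W)
    (μ μ' : Set (M × W)) (hμ : I.IsStable μ) (hμ' : I.IsStable μ')
    (C₁ C₂ : Set (M × W)) (hC₁ : I.IsNontrivialComp (I.starV μ μ') C₁)
    (hC₂ : I.IsNontrivialComp (I.starV μ μ') C₂) (hCne : C₁ ≠ C₂) :
    (∃ ν ν' : Set (M × W), I.IsStable ν ∧ I.IsStable ν' ∧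
      ν ≠ μ ∧ ν ≠ μ' ∧ ν' ≠ μ ∧ ν' ≠ μ' ∧ ν ≠ ν' ∧
      chi μ + chi μ' = chi ν + chi ν') ∧
    ¬ I.AdjacentSM μ μ' := by
  have main : ∃ ν ν' : Set (M × W), I.IsStable ν ∧ I.IsStable ν' ∧
      ν ≠ μ ∧ ν ≠ μ' ∧ ν' ≠ μ ∧ ν' ≠ μ' ∧ ν ≠ ν' ∧
      chi μ + chi μ' = chi ν + chi ν' := by
    have hcl : RowColClosed (I.starV μ μ') C₁ := by
      obtain ⟨⟨v, -, rfl⟩, -⟩ := hC₁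
      exact I.rowColClosed_comp (fun p hp => hp.1) v
    obtain ⟨p, hp, xp⟩ := I.exists_mem_xor hμ.1 hμ'.1 hC₁
    obtain ⟨q, hq, xq⟩ := I.exists_mem_xor hμ.1 hμ'.1 hC₂
    have hq₁ : q ∉ C₁ := fun h => hCne (I.comp_eq hC₁ hC₂ h hq)
    -- Both switched matchings are determined at `p ∈ C₁` and at `q ∉ C₁`.
    have p1 : p ∈ switch μ μ' C₁ ↔ p ∈ μ' := by simp [switch, hp]
    have p2 : p ∈ switch μ μ' C₁ᶜ ↔ p ∈ μ := by simp [switch, hp]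
    have q1 : q ∈ switch μ μ' C₁ ↔ q ∈ μ := by simp [switch, hq₁]
    have q2 : q ∈ switch μ μ' C₁ᶜ ↔ q ∈ μ' := by simp [switch, hq₁]
    rw [xor_iff_not_iff] at xp xq
    refine ⟨switch μ μ' C₁, switch μ μ' C₁ᶜ, I.isStable_switch hμ hμ' hcl,
      I.isStable_switch hμ hμ' hcl.compl, fun e => ?_, fun e => ?_, fun e => ?_, fun e => ?_,
      fun e => ?_, chi_switch_add μ μ' C₁⟩
    · rw [e] at p1; exact xp p1
    · rw [e] at q1; exact xq q1.symm
    · rw [e] at q2; exact xq q2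
    · rw [e] at p2; exact xp p2.symm
    · rw [e] at p1; exact xp (p2.symm.trans p1)
  refine ⟨main, fun hadj => ?_⟩
  obtain ⟨ν, ν', hν, hν', h1, h2, -, -, hne, hsum⟩ := main
  have := hadj.2 {ν, ν'} (fun _ => 2⁻¹) (by simp [hν, hν']) (by intros; norm_num)
    (by rw [Finset.sum_pair hne]; norm_num)
    (by rw [Finset.sum_pair hne, hsum, smul_add]) ν (by simp) (by norm_num)
  exact this.elim (fun e => h1 (chi_injective e)) fun e => h2 (chi_injective e)
end

section
/- Let μ and μ' be distinct stable matchings and let k be the number of nontrivial weakly connected components of Γ*(μ,μ'). Then there exists a sequence of stable matchings μ = μ⁰, μ¹, …, μᵏ = μ' such that for every 0 ≤ j < k, the extreme points x_{μʲ} and x_{μʲ⁺¹} of P_SMT are adjacent. In particular, the distance between x_μ and x_μ' in the graph on extreme points of P_SMT with adjacency as edges is at most k. -/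
/-!
Write a stable matching as a choice of partner for every agent. Two vertices of `Γ*(μ, μ')` are
adjacent exactly when they share a man or a woman, so the components of `Γ*` split the agents on
which `μ` and `μ'` differ into classes.

*Exchange.* Following `μ'` on a union `D` of components and `μ` elsewhere is a matching, because
`μ ∪ μ'` consists of vertices of `Γ*`. It is stable: a blocking pair would join an agent following
`μ'` to one following `μ`, and stability of `μ` and `μ'` would put that pair between the two
matchings on both sides, hence into `Γ*`, linking a component in `D` to one outside it
(`hyb_isStable`). Switching the `k` nontrivial components one at a time gives the sequence; only
nontrivial components matter, since common pairs are isolated and no other pair of `μ ∪ μ'` is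
(`eq_of_mem_inter`, `exists_comp_of_diff`).

*Adjacency.* Let `ν` have positive weight in a convex representation of the midpoint of `α` and `β`.
Every valid inequality tight at `α` and `β` is tight at `ν` (`inFace_of_convex`). Nonnegativity and
the degree constraints show that each agent is matched in `ν` as in `α` or as in `β`
(`InFace.agree_iff`). For a vertex `v` of `Γ*` outside `α ∪ β`, the inequality saying that `v` does
not block is tight at both, and it forces the man and the woman of `v` to make the same choice
(`InFace.agree_row_col`). Hence the choice is constant on components of `Γ*`, and if all
differences lie in one component then `ν` is `α` or `β` (`adjacent_of_connected`). Two consecutive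
matchings of the sequence satisfy this hypothesis, as the switched component survives in their `Γ*`
(`mem_starV_hyb`).
-/


open scoped Classical

namespace SMTI

variable {M W : Type*} {I : SMTI M W}

/-! ### Partners and blocking pairs without options -/

theorem IsMatching.mpartner_eq {ν : Set (M × W)} (h : I.IsMatching ν) {m : M} {w : W}
    (hp : (m, w) ∈ ν) : mpartner ν m = some w := by
  have hex : ∃ w, (m, w) ∈ ν := ⟨w, hp⟩
  rw [mpartner, dif_pos hex]
  exact congrArg some (h.2.1 _ _ _ hex.choose_spec hp)

theorem IsMatching.wpartner_eq {ν : Set (M × W)} (h : I.IsMatching ν) {m : M} {w : W}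
    (hp : (m, w) ∈ ν) : wpartner ν w = some m := by
  have hex : ∃ m, (m, w) ∈ ν := ⟨m, hp⟩
  rw [wpartner, dif_pos hex]
  exact congrArg some (h.2.2 _ _ _ hex.choose_spec hp)

theorem mpartner_none {ν : Set (M × W)} {m : M} (hp : ∀ w, (m, w) ∉ ν) :
    mpartner ν m = none := by
  rw [mpartner, dif_neg (by simpa using hp)]

theorem wpartner_none {ν : Set (M × W)} {w : W} (hp : ∀ m, (m, w) ∉ ν) :
    wpartner ν w = none := by
  rw [wpartner, dif_neg (by simpa using hp)]

/-- In `ν`, the man of the pair `v` has a partner he likes at least as much as the woman of `v`. -/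
def UM (I : SMTI M W) (ν : Set (M × W)) (v : M × W) : Prop :=
  ∃ w', (v.1, w') ∈ ν ∧ I.mle v.1 v.2 w'

/-- In `ν`, the woman of the pair `v` has a partner she likes at least as much as the man
of `v`. -/
def UW (I : SMTI M W) (ν : Set (M × W)) (v : M × W) : Prop :=
  ∃ m', (m', v.2) ∈ ν ∧ I.wle v.2 v.1 m'

theorem mleO_iff_UM {ν : Set (M × W)} (h : I.IsMatching ν) (v : M × W) :
    I.mleO v.1 (some v.2) (mpartner ν v.1) ↔ I.UM ν v := by
  by_cases hex : ∃ w, (v.1, w) ∈ ν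
  · obtain ⟨w, hw⟩ := hex
    rw [h.mpartner_eq hw]
    refine ⟨fun hle => ⟨w, hw, hle⟩, ?_⟩
    rintro ⟨w', hw', hle⟩
    obtain rfl := h.2.1 _ _ _ hw hw'
    exact hle
  · push Not at hex
    rw [mpartner_none hex]
    exact ⟨fun hf => hf.elim, fun ⟨w, hw, _⟩ => hex w hw⟩

theorem wleO_iff_UW {ν : Set (M × W)} (h : I.IsMatching ν) (v : M × W) :
    I.wleO v.2 (some v.1) (wpartner ν v.2) ↔ I.UW ν v := by
  by_cases hex : ∃ m, (m, v.2) ∈ ν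
  · obtain ⟨w, hw⟩ := hex
    rw [h.wpartner_eq hw]
    refine ⟨fun hle => ⟨w, hw, hle⟩, ?_⟩
    rintro ⟨w', hw', hle⟩
    obtain rfl := h.2.2 _ _ _ hw hw'
    exact hle
  · push Not at hex
    rw [wpartner_none hex]
    exact ⟨fun hf => hf.elim, fun ⟨w, hw, _⟩ => hex w hw⟩

/-- By totality, strict preference for the woman of `v` is the negation of `UM`. -/
theorem mltO_iff_not_UM {ν : Set (M × W)} (h : I.IsMatching ν) {v : M × W} (hv : v ∈ I.Acc) :
    I.mltO v.1 (mpartner ν v.1) (some v.2) ↔ ¬ I.UM ν v := by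
  rw [mltO, mleO_iff_UM h]
  refine ⟨fun h => h.2, fun hn => ⟨?_, hn⟩⟩
  by_cases hex : ∃ w, (v.1, w) ∈ ν
  · obtain ⟨w, hw⟩ := hex
    rw [h.mpartner_eq hw]
    exact (I.mle_total v.1 v.2 w hv (h.1 hw)).resolve_left fun hle => hn ⟨w, hw, hle⟩
  · push Not at hex
    rw [mpartner_none hex]
    exact hv

theorem wltO_iff_not_UW {ν : Set (M × W)} (h : I.IsMatching ν) {v : M × W} (hv : v ∈ I.Acc) :
    I.wltO v.2 (wpartner ν v.2) (some v.1) ↔ ¬ I.UW ν v := by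
  rw [wltO, wleO_iff_UW h]
  refine ⟨fun h => h.2, fun hn => ⟨?_, hn⟩⟩
  by_cases hex : ∃ m, (m, v.2) ∈ ν
  · obtain ⟨w, hw⟩ := hex
    rw [h.wpartner_eq hw]
    exact (I.wle_total v.2 v.1 w hv (h.1 hw)).resolve_left fun hle => hn ⟨w, hw, hle⟩
  · push Not at hex
    rw [wpartner_none hex]
    exact hv

theorem mpartner_iff {ν : Set (M × W)} (h : I.IsMatching ν) (v : M × W) :
    some v.2 = mpartner ν v.1 ↔ v ∈ ν := by
  refine ⟨fun he => ?_, fun hv => (h.mpartner_eq hv).symm⟩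
  by_cases hex : ∃ w, (v.1, w) ∈ ν
  · obtain ⟨w, hw⟩ := hex
    rw [h.mpartner_eq hw, Option.some.injEq] at he
    rwa [← he] at hw
  · push Not at hex
    simp [mpartner_none hex] at he

theorem wpartner_iff {ν : Set (M × W)} (h : I.IsMatching ν) (v : M × W) :
    some v.1 = wpartner ν v.2 ↔ v ∈ ν := by
  refine ⟨fun he => ?_, fun hv => (h.wpartner_eq hv).symm⟩
  by_cases hex : ∃ m, (m, v.2) ∈ ν
  · obtain ⟨w, hw⟩ := hex
    rw [h.wpartner_eq hw, Option.some.injEq] at he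
    rwa [← he] at hw
  · push Not at hex
    simp [wpartner_none hex] at he

theorem isStable_iff {ν : Set (M × W)} :
    I.IsStable ν ↔ I.IsMatching ν ∧ ∀ v ∈ I.Acc, I.UM ν v ∨ I.UW ν v := by
  refine and_congr_right fun h => forall₂_congr fun v _ => ?_
  rw [mleO_iff_UM h, wleO_iff_UW h]

theorem mem_starV_iff {α β : Set (M × W)} (hα : I.IsMatching α) (hβ : I.IsMatching β)
    {v : M × W} : v ∈ I.starV α β ↔ v ∈ I.Acc ∧
      (v ∈ α ∨ v ∈ β ∨ (¬ I.UM α v ∧ I.UM β v) ∨ (¬ I.UM β v ∧ I.UM α v)) ∧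
      (v ∈ α ∨ v ∈ β ∨ (¬ I.UW α v ∧ I.UW β v) ∨ (¬ I.UW β v ∧ I.UW α v)) := by
  rw [starV, Set.mem_ofPred_eq]
  refine and_congr_right fun hv => ?_
  rw [betweenM, betweenW, mpartner_iff hα, mpartner_iff hβ, wpartner_iff hα, wpartner_iff hβ,
    mltO_iff_not_UM hα hv, mltO_iff_not_UM hβ hv, wltO_iff_not_UW hα hv, wltO_iff_not_UW hβ hv,
    mleO_iff_UM hα, mleO_iff_UM hβ, wleO_iff_UW hα, wleO_iff_UW hβ]

theorem starV_comm (α β : Set (M × W)) : I.starV α β = I.starV β α := by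
  ext v
  simp only [starV, betweenM, betweenW, Set.mem_ofPred_eq]
  tauto

theorem left_subset_starV_s15 {α β : Set (M × W)} (hα : I.IsMatching α) (hβ : I.IsMatching β) :
    α ⊆ I.starV α β := fun _ hv =>
  (mem_starV_iff hα hβ).2 ⟨hα.1 hv, Or.inl hv, Or.inl hv⟩

theorem right_subset_starV_s15 {α β : Set (M × W)} (hα : I.IsMatching α) (hβ : I.IsMatching β) :
    β ⊆ I.starV α β := starV_comm (I := I) α β ▸ left_subset_starV_s15 hβ hα

/-- A vertex of `Γ*` outside both matchings: stability forces the man and the woman to disagree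
on which of the two matchings is strictly worse than `v`. -/
theorem starV_opp {α β : Set (M × W)} (hα : I.IsStable α) (hβ : I.IsStable β)
    {v : M × W} (hv : v ∈ I.starV α β) (h1 : v ∉ α) (h2 : v ∉ β) :
    (¬ I.UM α v ∧ I.UM β v ∧ I.UW α v ∧ ¬ I.UW β v) ∨
      (¬ I.UM β v ∧ I.UM α v ∧ I.UW β v ∧ ¬ I.UW α v) := by
  have h := (mem_starV_iff hα.1 hβ.1).1 hv
  have ha := (isStable_iff.1 hα).2 v h.1
  have hb := (isStable_iff.1 hβ).2 v h.1
  tauto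

/-! ### Adjacency in `Γ*` -/

theorem adjIn_share {S : Set (M × W)} {p q : M × W} (h : I.adjIn S p q) :
    p ≠ q ∧ (p.1 = q.1 ∨ p.2 = q.2) := by
  obtain ⟨-, -, ⟨-, -, h | h⟩ | ⟨-, -, h | h⟩⟩ := h
  · exact ⟨fun e => h.2.1 (by rw [e]), Or.inl h.1⟩
  · exact ⟨fun e => h.2.1 (by rw [e]), Or.inr h.1⟩
  · exact ⟨fun e => h.2.1 (by rw [e]), Or.inl h.1.symm⟩
  · exact ⟨fun e => h.2.1 (by rw [e]), Or.inr h.1.symm⟩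

theorem adjIn_of_share {S : Set (M × W)} (hS : S ⊆ I.Acc) {p q : M × W} (hp : p ∈ S)
    (hq : q ∈ S) (hne : p ≠ q) (h : p.1 = q.1 ∨ p.2 = q.2) : I.adjIn S p q := by
  refine ⟨hp, hq, ?_⟩
  obtain ⟨m, w⟩ := p
  obtain ⟨m', w'⟩ := q
  rcases h with h | h
  · obtain rfl : m = m' := h
    have hw : w ≠ w' := fun e => hne (by rw [e])
    rcases I.mle_total m w w' (hS hp) (hS hq) with h | h
    · exact Or.inl ⟨hS hp, hS hq, Or.inl ⟨rfl, hw, h⟩⟩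
    · exact Or.inr ⟨hS hq, hS hp, Or.inl ⟨rfl, hw.symm, h⟩⟩
  · obtain rfl : w = w' := h
    have hm : m ≠ m' := fun e => hne (by rw [e])
    rcases I.wle_total w m m' (hS hp) (hS hq) with h | h
    · exact Or.inl ⟨hS hp, hS hq, Or.inr ⟨rfl, hm, h⟩⟩
    · exact Or.inr ⟨hS hq, hS hp, Or.inr ⟨rfl, hm.symm, h⟩⟩

theorem starV_subset_Acc (α β : Set (M × W)) : I.starV α β ⊆ I.Acc := fun _ h => h.1

theorem UM_of_mem {ν : Set (M × W)} (h : I.IsMatching ν) {v : M × W} (hv : v ∈ ν) : I.UM ν v :=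
  ⟨v.2, hv, I.mle_refl _ _ (h.1 hv)⟩

theorem UW_of_mem {ν : Set (M × W)} (h : I.IsMatching ν) {v : M × W} (hv : v ∈ ν) : I.UW ν v :=
  ⟨v.1, hv, I.wle_refl _ _ (h.1 hv)⟩

/-- A common pair of the two matchings is isolated in `Γ*`. -/
theorem eq_of_mem_inter {α β : Set (M × W)} (hα : I.IsMatching α) (hβ : I.IsMatching β)
    {v q : M × W} (ha : v ∈ α) (hb : v ∈ β) (hq : q ∈ I.starV α β)
    (h : v.1 = q.1 ∨ v.2 = q.2) : v = q := by
  obtain ⟨m, w⟩ := v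
  obtain ⟨m', w'⟩ := q
  obtain ⟨-, h1, h2⟩ := (mem_starV_iff hα hβ).1 hq
  rcases h with h | h
  · obtain rfl : m = m' := h
    have e : I.UM α (m, w') ↔ I.UM β (m, w') := by
      constructor
      · rintro ⟨x, hx, hl⟩
        obtain rfl := hα.2.1 _ _ _ ha hx
        exact ⟨_, hb, hl⟩
      · rintro ⟨x, hx, hl⟩
        obtain rfl := hβ.2.1 _ _ _ hb hx
        exact ⟨_, ha, hl⟩
    have : (m, w') ∈ α ∨ (m, w') ∈ β := by tauto
    rcases this with h | h
    · rw [hα.2.1 _ _ _ ha h]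
    · rw [hβ.2.1 _ _ _ hb h]
  · obtain rfl : w = w' := h
    have e : I.UW α (m', w) ↔ I.UW β (m', w) := by
      constructor
      · rintro ⟨x, hx, hl⟩
        obtain rfl := hα.2.2 _ _ _ ha hx
        exact ⟨_, hb, hl⟩
      · rintro ⟨x, hx, hl⟩
        obtain rfl := hβ.2.2 _ _ _ hb hx
        exact ⟨_, ha, hl⟩
    have : (m', w) ∈ α ∨ (m', w) ∈ β := by tauto
    rcases this with h | h
    · rw [hα.2.2 _ _ _ ha h]
    · rw [hβ.2.2 _ _ _ hb h]

/-! ### Tight valid inequalities -/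

theorem chi_injective_s15 : Function.Injective (chi : Set (M × W) → M × W → ℝ) := by
  intro α β h
  ext p
  have := congrFun h p
  by_cases h1 : p ∈ α <;> by_cases h2 : p ∈ β <;> simp_all [chi]

/-- A set of pairs met by every stable matching at most once (such as a row or a column). -/
def IsLine (I : SMTI M W) (L : Set (M × W)) : Prop :=
  ∀ τ, I.IsStable τ → (L ∩ τ).Subsingleton

theorem isLine_row (m : M) : I.IsLine {p : M × W | p.1 = m} := by
  rintro τ hτ ⟨a, b⟩ ⟨h1, h2⟩ ⟨c, d⟩ ⟨h3, h4⟩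
  obtain rfl : a = m := h1
  obtain rfl : c = a := h3
  rw [hτ.1.2.1 _ _ _ h2 h4]

theorem isLine_col (w : W) : I.IsLine {p : M × W | p.2 = w} := by
  rintro τ hτ ⟨a, b⟩ ⟨h1, h2⟩ ⟨c, d⟩ ⟨h3, h4⟩
  obtain rfl : b = w := h1
  obtain rfl : d = b := h3
  rw [hτ.1.2.2 _ _ _ h2 h4]

theorem isLine_point (p : M × W) : I.IsLine {p} := fun _ _ =>
  Set.subsingleton_singleton.anti Set.inter_subset_left

/-- The pair `v` together with its out-neighbours in `Γ`. -/
def upSet (I : SMTI M W) (v : M × W) : Set (M × W) :=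
  {p | (p.1 = v.1 ∧ I.mle v.1 v.2 p.2) ∨ (p.2 = v.2 ∧ I.wle v.2 v.1 p.1)}

theorem upSet_nonempty {v : M × W} (hv : v ∈ I.Acc) {τ : Set (M × W)} (hτ : I.IsStable τ) :
    (I.upSet v ∩ τ).Nonempty := by
  rcases (isStable_iff.1 hτ).2 v hv with ⟨w, hw, hl⟩ | ⟨m, hm, hl⟩
  · exact ⟨(v.1, w), Or.inl ⟨rfl, hl⟩, hw⟩
  · exact ⟨(m, v.2), Or.inr ⟨rfl, hl⟩, hm⟩

section Tight

variable [Fintype M] [Fintype W]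

theorem dotP_chi (X ν : Set (M × W)) :
    dotP (chi X) (chi ν) = ((X ∩ ν).ncard : ℝ) := by
  rw [Set.ncard_eq_toFinset_card']
  simp only [dotP, chi, ← ite_and, mul_ite, mul_one, mul_zero]
  rw [Finset.sum_boole]
  congr 2
  ext p
  simp [and_comm]

/-- `ν` lies on every face of `P_SMT` containing both `α` and `β`: every valid inequality that is
tight at `α` and `β` is tight at `ν`. -/
def InFace (I : SMTI M W) (α β ν : Set (M × W)) : Prop :=
  ∀ (a : M × W → ℝ) (b : ℝ), (∀ τ, I.IsStable τ → b ≤ dotP a (chi τ)) →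
    dotP a (chi α) = b → dotP a (chi β) = b → dotP a (chi ν) = b

theorem inFace_of_convex {α β : Set (M × W)} (T : Finset (Set (M × W)))
    (c : Set (M × W) → ℝ) (hT : ∀ ν ∈ T, I.IsStable ν) (hc : ∀ ν ∈ T, 0 ≤ c ν)
    (h1 : (∑ ν ∈ T, c ν) = 1)
    (h2 : (∑ ν ∈ T, c ν • chi ν) = (2⁻¹ : ℝ) • (chi α + chi β))
    {ν : Set (M × W)} (hν : ν ∈ T) (hcν : c ν ≠ 0) : I.InFace α β ν := by
  intro a b hval ha hb
  have hd : ∑ τ ∈ T, c τ * dotP a (chi τ) = b := by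
    have e : ∑ τ ∈ T, c τ * dotP a (chi τ) = dotP a (∑ τ ∈ T, c τ • chi τ) := by
      simp only [dotP, Finset.sum_apply, Pi.smul_apply, smul_eq_mul, Finset.mul_sum]
      rw [Finset.sum_comm]
      exact Finset.sum_congr rfl fun _ _ => Finset.sum_congr rfl fun _ _ => by ring
    rw [e, h2]
    have e' : dotP a ((2⁻¹ : ℝ) • (chi α + chi β))
        = 2⁻¹ * (dotP a (chi α) + dotP a (chi β)) := by
      simp only [dotP, Pi.smul_apply, Pi.add_apply, smul_eq_mul, ← Finset.sum_add_distrib,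
        Finset.mul_sum]
      exact Finset.sum_congr rfl fun _ _ => by ring
    rw [e', ha, hb]
    ring
  have hz : ∑ τ ∈ T, c τ * (dotP a (chi τ) - b) = 0 := by
    simp only [mul_sub, Finset.sum_sub_distrib, hd, ← Finset.sum_mul, h1]
    ring
  have := (Finset.sum_eq_zero_iff_of_nonneg fun τ hτ =>
    mul_nonneg (hc τ hτ) (sub_nonneg.2 (hval τ (hT τ hτ)))).1 hz ν hν
  rcases mul_eq_zero.1 this with h | h
  · exact absurd h hcν
  · linarith

theorem InFace.disjoint {α β ν : Set (M × W)} (h : I.InFace α β ν) {X : Set (M × W)}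
    (ha : X ∩ α = ∅) (hb : X ∩ β = ∅) : X ∩ ν = ∅ := by
  have := h (chi X) 0 (fun τ _ => by rw [dotP_chi]; positivity)
    (by rw [dotP_chi, ha]; simp) (by rw [dotP_chi, hb]; simp)
  rw [dotP_chi, Nat.cast_eq_zero, Set.ncard_eq_zero] at this
  exact this

theorem InFace.singleton {α β ν : Set (M × W)} (h : I.InFace α β ν) {X : Set (M × W)}
    (hX : ∀ τ, I.IsStable τ → (X ∩ τ).Nonempty)
    (ha : (X ∩ α).ncard = 1) (hb : (X ∩ β).ncard = 1) : (X ∩ ν).ncard = 1 := by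
  have := h (chi X) 1 (fun τ hτ => by
      rw [dotP_chi]
      exact_mod_cast (Set.ncard_pos).2 (hX τ hτ))
    (by rw [dotP_chi, ha]; simp) (by rw [dotP_chi, hb]; simp)
  rw [dotP_chi] at this
  exact_mod_cast this

theorem InFace.nonempty {α β ν : Set (M × W)} (h : I.InFace α β ν) {L : Set (M × W)}
    (hL : I.IsLine L) (hsα : I.IsStable α) (hsβ : I.IsStable β)
    (ha : (L ∩ α).Nonempty) (hb : (L ∩ β).Nonempty) : (L ∩ ν).Nonempty := by
  have key : ∀ τ, dotP (-chi L) (chi τ) = -((L ∩ τ).ncard : ℝ) := by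
    intro τ
    rw [← dotP_chi]
    simp [dotP]
  have le1 : ∀ τ, I.IsStable τ → (L ∩ τ).ncard ≤ 1 := fun τ hτ =>
    Set.ncard_le_one_iff_subsingleton.2 (hL τ hτ)
  have ea : (L ∩ α).ncard = 1 := le_antisymm (le1 α hsα) ((Set.ncard_pos).2 ha)
  have eb : (L ∩ β).ncard = 1 := le_antisymm (le1 β hsβ) ((Set.ncard_pos).2 hb)
  have := h (-chi L) (-1) (fun τ hτ => by
      rw [key]
      have := le1 τ hτ
      have : ((L ∩ τ).ncard : ℝ) ≤ 1 := by exact_mod_cast this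
      linarith)
    (by rw [key, ea]; simp) (by rw [key, eb]; simp)
  rw [key, neg_inj] at this
  have h1 : (L ∩ ν).ncard = 1 := by exact_mod_cast this
  exact (Set.ncard_pos).1 (by omega)

/-- `ν` agrees with `α` on the set `L`. -/
def Agree (α ν L : Set (M × W)) : Prop := ∀ p ∈ L, p ∈ α ↔ p ∈ ν

theorem InFace.subset_union {α β ν : Set (M × W)} (h : I.InFace α β ν) : ν ⊆ α ∪ β := by
  intro p hp
  by_contra hn
  simp only [Set.mem_union, not_or] at hn
  have := h.disjoint (X := {p}) (by simpa using hn.1) (by simpa using hn.2)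
  simp at this
  exact this hp

theorem InFace.inter_subset {α β ν : Set (M × W)} (h : I.InFace α β ν)
    (hα : I.IsStable α) (hβ : I.IsStable β) {p : M × W} (ha : p ∈ α) (hb : p ∈ β) : p ∈ ν := by
  simpa using h.nonempty (isLine_point p) hα hβ ⟨p, rfl, ha⟩ ⟨p, rfl, hb⟩

/-- On a line containing a pair of only one of the two matchings, `ν` follows one of them, and
that pair decides which. -/
theorem InFace.agree_iff {α β ν L : Set (M × W)} (h : I.InFace α β ν)
    (hα : I.IsStable α) (hβ : I.IsStable β) (hν : I.IsStable ν) (hL : I.IsLine L)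
    {p : M × W} (hp : p ∈ L) (hd : ¬ (p ∈ α ↔ p ∈ β)) :
    Agree α ν L ↔ (p ∈ α ↔ p ∈ ν) := by
  refine ⟨fun h => h p hp, fun e q hq => ?_⟩
  by_cases hpa : p ∈ α
  · have hpν := e.1 hpa
    constructor
    · intro hqa
      rwa [hL α hα ⟨hq, hqa⟩ ⟨hp, hpa⟩]
    · intro hqν
      rwa [hL ν hν ⟨hq, hqν⟩ ⟨hp, hpν⟩]
  · have hpb : p ∈ β := by tauto
    have hpν : p ∉ ν := fun h => hpa (e.2 h)
    have inα : ∀ r ∈ L, r ∈ ν → r ∈ α := by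
      intro r hr hrν
      refine (h.subset_union hrν).resolve_right fun hrb => hpν ?_
      rwa [hL β hβ ⟨hp, hpb⟩ ⟨hr, hrb⟩]
    refine ⟨fun hqa => ?_, inα q hq⟩
    obtain ⟨r, hr, hrν⟩ := h.nonempty hL hα hβ ⟨q, hq, hqa⟩ ⟨p, hp, hpb⟩
    rwa [hL α hα ⟨hq, hqa⟩ ⟨hr, inα r hr hrν⟩]

/-- If the man of `v` weakly prefers only `β` to `v` and the woman only `α`, then the stability
inequality of `v` is tight at both, which ties the behaviour of `ν` at the man to that at the
woman. -/
theorem InFace.agree_row_col {α β ν : Set (M × W)} (h : I.InFace α β ν)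
    (hα : I.IsStable α) (hβ : I.IsStable β) (hν : I.IsStable ν) {v : M × W} (hv : v ∈ I.Acc)
    (h1 : ¬ I.UM α v) (h2 : I.UM β v) (h3 : I.UW α v) (h4 : ¬ I.UW β v) :
    Agree α ν {p | p.1 = v.1} ↔ Agree α ν {p | p.2 = v.2} := by
  obtain ⟨w, hw, hwl⟩ := h2
  obtain ⟨m, hm, hml⟩ := h3
  have hqa : (v.1, w) ∉ α := fun hh => h1 ⟨w, hh, hwl⟩
  have hrb : (m, v.2) ∉ β := fun hh => h4 ⟨m, hh, hml⟩
  have eα : I.upSet v ∩ α = {(m, v.2)} := by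
    apply Set.Subset.antisymm
    · rintro ⟨a, b⟩ ⟨⟨rfl, hb⟩ | ⟨rfl, hb⟩, hp⟩
      · exact absurd ⟨_, hp, hb⟩ h1
      · exact Prod.ext (hα.1.2.2 _ _ _ hp hm) rfl
    · rintro _ rfl
      exact ⟨Or.inr ⟨rfl, hml⟩, hm⟩
  have eβ : I.upSet v ∩ β = {(v.1, w)} := by
    apply Set.Subset.antisymm
    · rintro ⟨a, b⟩ ⟨⟨rfl, hb⟩ | ⟨rfl, hb⟩, hp⟩
      · exact Prod.ext rfl (hβ.1.2.1 _ _ _ hp hw)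
      · exact absurd ⟨_, hp, hb⟩ h4
    · rintro _ rfl
      exact ⟨Or.inl ⟨rfl, hwl⟩, hw⟩
  have e1 : (I.upSet v ∩ ν).ncard = 1 := h.singleton (fun τ hτ => upSet_nonempty hv hτ)
    (by rw [eα]; simp) (by rw [eβ]; simp)
  obtain ⟨p, hp⟩ := Set.ncard_eq_one.1 e1
  rw [h.agree_iff hα hβ hν (isLine_row v.1) (p := (v.1, w)) rfl (by tauto),
    h.agree_iff hα hβ hν (isLine_col v.2) (p := (m, v.2)) rfl (by tauto)]
  have hpm : p ∈ I.upSet v ∩ ν := hp ▸ rfl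
  have only : ∀ q ∈ I.upSet v ∩ ν, q = p := fun q hq => by rw [hp] at hq; exact hq
  have hor : (v.1, w) ∈ ν ∨ (m, v.2) ∈ ν := by
    rcases h.subset_union hpm.2 with hpa | hpb
    · have : p ∈ I.upSet v ∩ α := ⟨hpm.1, hpa⟩
      rw [eα] at this
      exact Or.inr (this ▸ hpm.2)
    · have : p ∈ I.upSet v ∩ β := ⟨hpm.1, hpb⟩
      rw [eβ] at this
      exact Or.inl (this ▸ hpm.2)
  have hnand : ¬ ((v.1, w) ∈ ν ∧ (m, v.2) ∈ ν) := by
    rintro ⟨ha, hb⟩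
    have hx : (v.1, w) ∈ I.upSet v ∩ ν := ⟨Or.inl ⟨rfl, hwl⟩, ha⟩
    have hy : (m, v.2) ∈ I.upSet v ∩ ν := ⟨Or.inr ⟨rfl, hml⟩, hb⟩
    exact hqa (((only _ hx).trans (only _ hy).symm) ▸ hm)
  tauto

theorem InFace.symm {α β ν : Set (M × W)} (h : I.InFace α β ν) : I.InFace β α ν :=
  fun a b hv ha hb => h a b hv hb ha

/-- On a line where the two matchings differ, agreeing with `α` is the opposite of agreeing
with `β`. -/
theorem InFace.agree_swap {α β ν L : Set (M × W)} (h : I.InFace α β ν)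
    (hα : I.IsStable α) (hβ : I.IsStable β) (hν : I.IsStable ν) (hL : I.IsLine L)
    {p : M × W} (hp : p ∈ L) (hd : ¬ (p ∈ α ↔ p ∈ β)) :
    Agree β ν L ↔ ¬ Agree α ν L := by
  rw [h.agree_iff hα hβ hν hL hp hd, h.symm.agree_iff hβ hα hν hL hp (by tauto)]
  tauto

/-- At a vertex of `Γ*` that is not a common pair, `ν` follows `α` at the man iff it does so at
the woman. -/
theorem InFace.agree_vertex {α β ν : Set (M × W)} (h : I.InFace α β ν)
    (hα : I.IsStable α) (hβ : I.IsStable β) (hν : I.IsStable ν) {v : M × W}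
    (hv : v ∈ I.starV α β) (hnot : ¬ (v ∈ α ∧ v ∈ β)) :
    Agree α ν {p | p.1 = v.1} ↔ Agree α ν {p | p.2 = v.2} := by
  by_cases hd : v ∈ α ↔ v ∈ β
  · rcases starV_opp hα hβ hv (by tauto) (by tauto) with ⟨h1, h2, h3, h4⟩ | ⟨h1, h2, h3, h4⟩
    · exact h.agree_row_col hα hβ hν hv.1 h1 h2 h3 h4
    · have key := h.symm.agree_row_col hβ hα hν hv.1 h1 h2 h3 h4
      obtain ⟨w, hw, hwl⟩ := h2
      obtain ⟨m, hm, hml⟩ := h3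
      have hqa : (v.1, w) ∉ β := fun hh => h1 ⟨w, hh, hwl⟩
      have hrb : (m, v.2) ∉ α := fun hh => h4 ⟨m, hh, hml⟩
      rw [h.agree_swap hα hβ hν (isLine_row v.1) (p := (v.1, w)) rfl (by tauto),
        h.agree_swap hα hβ hν (isLine_col v.2) (p := (m, v.2)) rfl (by tauto)] at key
      exact not_iff_not.1 key
  · rw [h.agree_iff hα hβ hν (isLine_row v.1) (p := v) rfl hd,
      h.agree_iff hα hβ hν (isLine_col v.2) (p := v) rfl hd]

/-- If the symmetric difference of two distinct stable matchings lies in a single component of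
`Γ*`, then the two matchings are adjacent. -/
theorem adjacent_of_connected {α β : Set (M × W)} (hα : I.IsStable α) (hβ : I.IsStable β)
    (hne : α ≠ β)
    (hconn : ∀ p q, ¬ (p ∈ α ↔ p ∈ β) → ¬ (q ∈ α ↔ q ∈ β) →
      Relation.ReflTransGen (I.adjIn (I.starV α β)) p q) : I.AdjacentSM α β := by
  refine ⟨fun e => hne (chi_injective_s15 e), ?_⟩
  intro T c hT hc h1 h2 ν hνT hcν
  have hF : I.InFace α β ν := inFace_of_convex T c hT hc h1 h2 hνT hcν
  have hν := hT ν hνT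
  have step : ∀ p q, I.adjIn (I.starV α β) p q →
      (Agree α ν {x | x.1 = p.1} ↔ Agree α ν {x | x.1 = q.1}) := by
    intro p q hpq
    obtain ⟨hn, hs⟩ := adjIn_share hpq
    have hp : ¬ (p ∈ α ∧ p ∈ β) := fun hh =>
      hn (eq_of_mem_inter hα.1 hβ.1 hh.1 hh.2 hpq.2.1 hs)
    have hq : ¬ (q ∈ α ∧ q ∈ β) := fun hh =>
      hn (eq_of_mem_inter hα.1 hβ.1 hh.1 hh.2 hpq.1 (hs.imp Eq.symm Eq.symm)).symm
    rcases hs with e | e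
    · rw [e]
    · rw [hF.agree_vertex hα hβ hν hpq.1 hp, hF.agree_vertex hα hβ hν hpq.2.1 hq, e]
  have chain : ∀ p q, Relation.ReflTransGen (I.adjIn (I.starV α β)) p q →
      (Agree α ν {x | x.1 = p.1} ↔ Agree α ν {x | x.1 = q.1}) := by
    intro p q hpq
    induction hpq with
    | refl => rfl
    | tail _ hs ih => exact ih.trans (step _ _ hs)
  have col : ∀ p, ¬ (p ∈ α ↔ p ∈ β) →
      (Agree α ν {x | x.1 = p.1} ↔ (p ∈ α ↔ p ∈ ν)) := fun p hp =>
    hF.agree_iff hα hβ hν (isLine_row p.1) rfl hp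
  have same : ∀ p, (p ∈ α ↔ p ∈ β) → (p ∈ ν ↔ p ∈ α) := by
    intro p hp
    refine ⟨fun h => ?_, fun h => hF.inter_subset hα hβ h (hp.1 h)⟩
    have := hF.subset_union h
    simp only [Set.mem_union] at this
    tauto
  by_cases hall : ∃ p, ¬ (p ∈ α ↔ p ∈ β) ∧ (p ∈ α ↔ p ∈ ν)
  · left
    obtain ⟨p, hp, hpc⟩ := hall
    congr 1
    ext q
    by_cases hq : q ∈ α ↔ q ∈ β
    · exact same q hq
    · have := chain p q (hconn p q hp hq)
      rw [col p hp, col q hq] at this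
      exact (this.1 hpc).symm
  · right
    push Not at hall
    congr 1
    ext q
    by_cases hq : q ∈ α ↔ q ∈ β
    · exact (same q hq).trans hq
    · have := hall q
      tauto

end Tight

/-! ### Exchanging the two matchings on a union of components -/

/-- The matching that follows `μ'` on `D` and `μ` elsewhere. -/
def hyb (μ μ' D : Set (M × W)) : Set (M × W) := {p | (p ∈ D ∧ p ∈ μ') ∨ (p ∉ D ∧ p ∈ μ)}

/-- `D` is a set of vertices of `S` closed under passing to any vertex of `S` in the same row or
column; for `S = Γ*(μ, μ')` this means that `D` is a union of components. -/
def Closed (S D : Set (M × W)) : Prop :=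
  D ⊆ S ∧ ∀ p ∈ D, ∀ q ∈ S, p.1 = q.1 ∨ p.2 = q.2 → q ∈ D

section Hyb

variable {μ μ' D : Set (M × W)} (hμ : I.IsStable μ) (hμ' : I.IsStable μ')
  (hD : Closed (I.starV μ μ') D)

include hμ hμ' hD

theorem hyb_row_pos {p q : M × W} (hp : p ∈ D) (h : p.1 = q.1 ∨ p.2 = q.2) :
    q ∈ hyb μ μ' D ↔ q ∈ μ' := by
  constructor
  · rintro (⟨-, h1⟩ | ⟨h1, h2⟩)
    · exact h1
    · exact absurd (hD.2 p hp q (left_subset_starV_s15 hμ.1 hμ'.1 h2) h) h1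
  · intro hq
    exact Or.inl ⟨hD.2 p hp q (right_subset_starV_s15 hμ.1 hμ'.1 hq) h, hq⟩

omit hμ hμ' hD in
theorem hyb_neg {q : M × W} (hq : q ∉ D) : q ∈ hyb μ μ' D ↔ q ∈ μ := by
  simp [hyb, hq]

theorem hyb_isStable : I.IsStable (hyb μ μ' D) := by
  rw [isStable_iff]
  have rowp : ∀ m, (∃ w, (m, w) ∈ D) → ∀ w, (m, w) ∈ hyb μ μ' D ↔ (m, w) ∈ μ' :=
    fun m ⟨x, hx⟩ w => hyb_row_pos hμ hμ' hD hx (Or.inl rfl)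
  have rown : ∀ m, (¬ ∃ w, (m, w) ∈ D) → ∀ w, (m, w) ∈ hyb μ μ' D ↔ (m, w) ∈ μ :=
    fun m hn w => hyb_neg fun h => hn ⟨w, h⟩
  have colp : ∀ w, (∃ m, (m, w) ∈ D) → ∀ m, (m, w) ∈ hyb μ μ' D ↔ (m, w) ∈ μ' :=
    fun w ⟨x, hx⟩ m => hyb_row_pos hμ hμ' hD hx (Or.inr rfl)
  have coln : ∀ w, (¬ ∃ m, (m, w) ∈ D) → ∀ m, (m, w) ∈ hyb μ μ' D ↔ (m, w) ∈ μ :=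
    fun w hn m => hyb_neg fun h => hn ⟨m, h⟩
  refine ⟨⟨?_, ?_, ?_⟩, ?_⟩
  · rintro p (⟨-, h⟩ | ⟨-, h⟩)
    · exact hμ'.1.1 h
    · exact hμ.1.1 h
  · intro m w w' h1 h2
    by_cases hm : ∃ w, (m, w) ∈ D
    · rw [rowp m hm] at h1 h2
      exact hμ'.1.2.1 _ _ _ h1 h2
    · rw [rown m hm] at h1 h2
      exact hμ.1.2.1 _ _ _ h1 h2
  · intro m m' w h1 h2
    by_cases hm : ∃ m, (m, w) ∈ D
    · rw [colp w hm] at h1 h2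
      exact hμ'.1.2.2 _ _ _ h1 h2
    · rw [coln w hm] at h1 h2
      exact hμ.1.2.2 _ _ _ h1 h2
  · rintro ⟨m, w⟩ hv
    have s := (isStable_iff.1 hμ).2 _ hv
    have s' := (isStable_iff.1 hμ').2 _ hv
    have hS := mem_starV_iff hμ.1 hμ'.1 (v := (m, w))
    by_cases hm : ∃ w, (m, w) ∈ D <;> by_cases hw : ∃ m, (m, w) ∈ D
    · simpa only [UM, UW, rowp m hm, colp w hw] using s'
    · have e1 : I.UM (hyb μ μ' D) (m, w) ↔ I.UM μ' (m, w) := by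
        simp only [UM, rowp m hm]
      have e2 : I.UW (hyb μ μ' D) (m, w) ↔ I.UW μ (m, w) := by
        simp only [UW, coln w hw]
      rw [e1, e2]
      by_contra hn
      obtain ⟨x, hx⟩ := hm
      exact hw ⟨m, hD.2 _ hx _ (hS.2 (by tauto)) (Or.inl rfl)⟩
    · have e1 : I.UM (hyb μ μ' D) (m, w) ↔ I.UM μ (m, w) := by
        simp only [UM, rown m hm]
      have e2 : I.UW (hyb μ μ' D) (m, w) ↔ I.UW μ' (m, w) := by
        simp only [UW, colp w hw]
      rw [e1, e2]
      by_contra hn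
      obtain ⟨x, hx⟩ := hw
      exact hm ⟨w, hD.2 _ hx _ (hS.2 (by tauto)) (Or.inr rfl)⟩
    · simpa only [UM, UW, rown m hm, coln w hw] using s

/-- A component `C` disjoint from `D` survives in `Γ*` of the two hybrids that differ in `C`. -/
theorem mem_starV_hyb {C : Set (M × W)} (hC : Closed (I.starV μ μ') C)
    (hDC : Closed (I.starV μ μ') (D ∪ C)) (hdis : ∀ p ∈ C, p ∉ D) {v : M × W} (hv : v ∈ C) :
    v ∈ I.starV (hyb μ μ' D) (hyb μ μ' (D ∪ C)) := by
  have h0 : ∀ q : M × W, v.1 = q.1 ∨ v.2 = q.2 → (q ∈ hyb μ μ' D ↔ q ∈ μ) := by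
    intro q hq
    refine hyb_neg fun hqD => hdis v hv (hD.2 q hqD v (hC.1 hv) (hq.imp Eq.symm Eq.symm))
  have h1 : ∀ q : M × W, v.1 = q.1 ∨ v.2 = q.2 → (q ∈ hyb μ μ' (D ∪ C) ↔ q ∈ μ') :=
    fun q hq => hyb_row_pos hμ hμ' hDC (Or.inr hv) hq
  rw [mem_starV_iff (hyb_isStable hμ hμ' hD).1 (hyb_isStable hμ hμ' hDC).1]
  have := (mem_starV_iff hμ.1 hμ'.1).1 (hC.1 hv)
  have m0 : ∀ w, (v.1, w) ∈ hyb μ μ' D ↔ (v.1, w) ∈ μ := fun w => h0 _ (Or.inl rfl)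
  have w0 : ∀ m, (m, v.2) ∈ hyb μ μ' D ↔ (m, v.2) ∈ μ := fun w => h0 _ (Or.inr rfl)
  have m1 : ∀ w, (v.1, w) ∈ hyb μ μ' (D ∪ C) ↔ (v.1, w) ∈ μ' := fun w => h1 _ (Or.inl rfl)
  have w1 : ∀ m, (m, v.2) ∈ hyb μ μ' (D ∪ C) ↔ (m, v.2) ∈ μ' := fun w => h1 _ (Or.inr rfl)
  simpa only [UM, UW, m0, w0, m1, w1, h0 v (Or.inl rfl), h1 v (Or.inl rfl)] using this

end Hyb

/-! ### Components -/

theorem connIn_symm {S : Set (M × W)} {p q : M × W} (h : I.connIn S p q) : I.connIn S q p :=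
  ⟨h.2.1, h.1, by
    have : Std.Symm (I.adjIn S) := ⟨fun _ _ h => ⟨h.2.1, h.1, h.2.2.symm⟩⟩
    exact Relation.ReflTransGen.stdSymm.symm _ _ h.2.2⟩

theorem connIn_trans {S : Set (M × W)} {p q r : M × W} (h : I.connIn S p q)
    (h' : I.connIn S q r) : I.connIn S p r :=
  ⟨h.1, h'.2.1, h.2.2.trans h'.2.2⟩

theorem comp_closed {S C : Set (M × W)} (hS : S ⊆ I.Acc) (hC : I.IsNontrivialComp S C) :
    Closed S C := by
  obtain ⟨⟨v, hv, rfl⟩, -⟩ := hC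
  refine ⟨fun p hp => hp.2.1, fun p hp q hq h => ?_⟩
  by_cases e : p = q
  · exact e ▸ hp
  · exact ⟨hv, hq, hp.2.2.tail (adjIn_of_share hS hp.2.1 hq e h)⟩

theorem comp_eq_s15 {S C : Set (M × W)} (hC : I.IsNontrivialComp S C) {p : M × W} (hp : p ∈ C) :
    C = {u | I.connIn S p u} := by
  obtain ⟨⟨v, hv, rfl⟩, -⟩ := hC
  ext u
  exact ⟨fun h => connIn_trans (connIn_symm hp) h, fun h => connIn_trans hp h⟩

/-- A path in `Γ*` between two points of a component stays inside it. -/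
theorem comp_path {S C S' : Set (M × W)} (hC : I.IsNontrivialComp S C) (hCS : C ⊆ S')
    {p q : M × W} (hp : p ∈ C) (hq : q ∈ C) : Relation.ReflTransGen (I.adjIn S') p q := by
  have hC' := comp_eq_s15 hC hp
  rw [hC'] at hq
  obtain ⟨hpS, -, hpath⟩ := hq
  induction hpath with
  | refl => exact .refl
  | tail h1 h2 ih =>
    refine ih.tail ⟨hCS ?_, hCS ?_, h2.2.2⟩
    · rw [hC']
      exact ⟨hpS, h2.1, h1⟩
    · rw [hC']
      exact ⟨hpS, h2.2.1, h1.tail h2⟩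

theorem comp_exists_diff {μ μ' C : Set (M × W)} (hμ : I.IsStable μ) (hμ' : I.IsStable μ')
    (hC : I.IsNontrivialComp (I.starV μ μ') C) : ∃ p ∈ C, ¬ (p ∈ μ ↔ p ∈ μ') := by
  have hcl := comp_closed (starV_subset_Acc μ μ') hC
  obtain ⟨p, hp, q, hq, hpq⟩ := Set.not_subsingleton_iff.1 hC.2
  -- a path from `p` to `q ≠ p` has a first edge, so `p` is not isolated
  obtain ⟨r, hr⟩ : ∃ r, I.adjIn (I.starV μ μ') p r := by
    rcases Relation.ReflTransGen.cases_head (comp_path hC hcl.1 hp hq) with h | ⟨r, hr, -⟩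
    · exact absurd h hpq
    · exact ⟨r, hr⟩
  have hnot : ¬ (p ∈ μ ∧ p ∈ μ') := fun hh =>
    (adjIn_share hr).1 (eq_of_mem_inter hμ.1 hμ'.1 hh.1 hh.2 hr.2.1 (adjIn_share hr).2)
  by_cases hd : p ∈ μ ↔ p ∈ μ'
  · rcases starV_opp hμ hμ' (hcl.1 hp) (by tauto) (by tauto) with ⟨h1, h2, -⟩ | ⟨h1, h2, -⟩
    · obtain ⟨w, hw, hl⟩ := h2
      have : (p.1, w) ∉ μ := fun hh => h1 ⟨w, hh, hl⟩
      exact ⟨(p.1, w), hcl.2 p hp _ (right_subset_starV_s15 hμ.1 hμ'.1 hw) (Or.inl rfl), by tauto⟩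
    · obtain ⟨w, hw, hl⟩ := h2
      have : (p.1, w) ∉ μ' := fun hh => h1 ⟨w, hh, hl⟩
      exact ⟨(p.1, w), hcl.2 p hp _ (left_subset_starV_s15 hμ.1 hμ'.1 hw) (Or.inl rfl), by tauto⟩
  · exact ⟨p, hp, hd⟩

theorem exists_comp_of_diff {μ μ' : Set (M × W)} (hμ : I.IsStable μ) (hμ' : I.IsStable μ')
    {p : M × W} (hd : ¬ (p ∈ μ ↔ p ∈ μ')) :
    ∃ C, I.IsNontrivialComp (I.starV μ μ') C ∧ p ∈ C := by
  have hpS : p ∈ I.starV μ μ' := by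
    by_cases h : p ∈ μ
    · exact left_subset_starV_s15 hμ.1 hμ'.1 h
    · exact right_subset_starV_s15 hμ.1 hμ'.1 (by tauto)
  -- the matching omitting `p` gives one end of `p` another partner, since `p` does not block it
  obtain ⟨q, hq, hqp, hs⟩ : ∃ q ∈ I.starV μ μ', p ≠ q ∧ (p.1 = q.1 ∨ p.2 = q.2) := by
    have aux : ∀ τ, I.IsStable τ → τ ⊆ I.starV μ μ' → p ∉ τ →
        ∃ q ∈ I.starV μ μ', p ≠ q ∧ (p.1 = q.1 ∨ p.2 = q.2) := by
      intro τ hτ hsub hpτ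
      rcases (isStable_iff.1 hτ).2 p hpS.1 with ⟨w, hw, -⟩ | ⟨m, hm, -⟩
      · exact ⟨_, hsub hw, fun e => hpτ (e ▸ hw), Or.inl rfl⟩
      · exact ⟨_, hsub hm, fun e => hpτ (e ▸ hm), Or.inr rfl⟩
    by_cases h : p ∈ μ
    · exact aux μ' hμ' (right_subset_starV_s15 hμ.1 hμ'.1) (by tauto)
    · exact aux μ hμ (left_subset_starV_s15 hμ.1 hμ'.1) h
  have hpp : I.connIn (I.starV μ μ') p p := ⟨hpS, hpS, .refl⟩
  refine ⟨{u | I.connIn (I.starV μ μ') p u}, ⟨⟨p, hpS, rfl⟩, fun hsub => hqp ?_⟩, hpp⟩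
  exact hsub hpp ⟨hpS, hq, .single (adjIn_of_share (starV_subset_Acc _ _) hpS hq hqp hs)⟩

end SMTI

open SMTI in

theorem stmt15 {M W : Type*} [Fintype M] [Fintype W] (I : SMTI M W)
    (μ μ' : Set (M × W)) (hμ : I.IsStable μ) (hμ' : I.IsStable μ') (hne : μ ≠ μ')
    (k : ℕ) (hk : k = {C | I.IsNontrivialComp (I.starV μ μ') C}.ncard) :
    ∃ f : ℕ → Set (M × W), f 0 = μ ∧ f k = μ' ∧
      (∀ j ≤ k, I.IsStable (f j)) ∧
      ∀ j < k, I.AdjacentSM (f j) (f (j + 1)) := by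
  have hcard : Nat.card {C | I.IsNontrivialComp (I.starV μ μ') C} = k := hk.symm
  let e := (Finite.equivFinOfCardEq hcard).symm
  -- `D j` is the union of the first `j` components
  let D : ℕ → Set (M × W) := fun j => {p | ∃ i : Fin k, i.1 < j ∧ p ∈ (e i).1}
  have hcomp : ∀ i, I.IsNontrivialComp (I.starV μ μ') (e i).1 := fun i => (e i).2
  have hcl : ∀ i, Closed (I.starV μ μ') (e i).1 := fun i =>
    comp_closed (starV_subset_Acc μ μ') (hcomp i)
  have hDcl : ∀ j, Closed (I.starV μ μ') (D j) := fun j =>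
    ⟨fun p ⟨i, _, hp⟩ => (hcl i).1 hp, fun p ⟨i, hi, hp⟩ q hq h => ⟨i, hi, (hcl i).2 p hp q hq h⟩⟩
  have hst : ∀ j, I.IsStable (hyb μ μ' (D j)) := fun j => hyb_isStable hμ hμ' (hDcl j)
  refine ⟨fun j => hyb μ μ' (D j), ?_, ?_, fun j _ => hst j, ?_⟩
  · ext p
    exact hyb_neg fun ⟨i, hi, _⟩ => Nat.not_lt_zero _ hi
  · ext p
    by_cases hp : p ∈ D k
    · exact hyb_row_pos hμ hμ' (hDcl k) hp (Or.inl rfl)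
    · refine (hyb_neg hp).trans ?_
      by_contra hd
      obtain ⟨C, hC, hpC⟩ := exists_comp_of_diff hμ hμ' hd
      refine hp ⟨e.symm ⟨C, hC⟩, (e.symm ⟨C, hC⟩).2, ?_⟩
      rw [Equiv.apply_symm_apply]
      exact hpC
  · intro j hj
    let C : Set (M × W) := (e ⟨j, hj⟩).1
    have hC : I.IsNontrivialComp (I.starV μ μ') C := hcomp _
    have hCcl : Closed (I.starV μ μ') C := hcl _
    have hsucc : D (j + 1) = D j ∪ C := by
      ext p
      constructor
      · rintro ⟨i, hi, hp⟩
        rcases Nat.lt_succ_iff_lt_or_eq.1 hi with h | h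
        · exact Or.inl ⟨i, h, hp⟩
        · obtain rfl : i = ⟨j, hj⟩ := Fin.ext h
          exact Or.inr hp
      · rintro (⟨i, hi, hp⟩ | hp)
        · exact ⟨i, Nat.lt_succ_of_lt hi, hp⟩
        · exact ⟨⟨j, hj⟩, Nat.lt_succ_self j, hp⟩
    have hdis : ∀ p ∈ C, p ∉ D j := by
      rintro p hp ⟨i, hi, hpi⟩
      have heq : (e i).1 = (e ⟨j, hj⟩).1 :=
        (comp_eq_s15 (hcomp i) hpi).trans (comp_eq_s15 hC hp).symm
      have := e.injective (Subtype.ext heq)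
      rw [this] at hi
      exact lt_irrefl _ hi
    have hDC : Closed (I.starV μ μ') (D j ∪ C) := hsucc ▸ hDcl (j + 1)
    have hsub : C ⊆ I.starV (hyb μ μ' (D j)) (hyb μ μ' (D j ∪ C)) := fun v hv =>
      mem_starV_hyb hμ hμ' (hDcl j) hCcl hDC hdis hv
    have hdiff : ∀ p, ¬ (p ∈ hyb μ μ' (D j) ↔ p ∈ hyb μ μ' (D j ∪ C)) → p ∈ C := by
      intro p hp
      by_contra hpC
      apply hp
      simp only [hyb, Set.mem_ofPred_eq, Set.mem_union, hpC, or_false]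
    show I.AdjacentSM (hyb μ μ' (D j)) (hyb μ μ' (D (j + 1)))
    have hst' := hst (j + 1)
    rw [hsucc] at hst' ⊢
    refine adjacent_of_connected (hst j) hst' (fun heq => ?_) fun p q hp hq =>
      comp_path hC hsub (hdiff p hp) (hdiff q hq)
    obtain ⟨p, hp, hpd⟩ := comp_exists_diff hμ hμ' hC
    have h1 : p ∈ hyb μ μ' (D j) ↔ p ∈ μ := hyb_neg (hdis p hp)
    have h2 : p ∈ hyb μ μ' (D j ∪ C) ↔ p ∈ μ' :=
      hyb_row_pos hμ hμ' hDC (Or.inr hp) (Or.inl rfl)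
    rw [← h1, ← h2, heq] at hpd
    exact hpd Iff.rfl
end
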